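/- arXiv:1411.1477 — 3 statements merged into one kernel-verified Lean document; each statement's English description precedes it below -/
import Mathlib

section
/- For all natural numbers n, the triple sum over integers i, j, k of binom(2n, n+i) * binom(2n, n+j) * binom(2n, n+k) * |(i^2-j^2)(i^2-k^2)(j^2-k^2)| equals 3 * n^3 * (n-1) * binom(2n, n)^2 * 2^(2n-1). -/
/-- Binomial coefficient `n.choose k` extended to an integer lower index,
vanishing when `k < 0` (and, as usual, when `k > n`). -/
def ichoose (n : ℕ) (k : ℤ) : ℤ := if 0 ≤ k then (n.choose k.toNat : ℤ) else 0

/-!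
If `x ≥ y ≥ z` and `P = (x - y) * (x - z) * (y - z)`, the products `|x - y| * (x - z) * (y - z)`,
`|x - z| * (x - y) * (z - y)` and `|y - z| * (y - x) * (z - x)` are `P`, `-P` and `P`, so they add
up to `P = |P|`; both sides being symmetric, this holds in any order. With the weights
`w i = ichoose (2 * n) (n + i)`, the triple sum is therefore three times the sum of
`w i * w j * w k * |i² - j²| * (i² - k²) * (j² - k²)`, in which `k` is summed out using the moments
of `w` of order `0`, `2` and `4`. What remains is a double sum of `w a * w b * K a b`. On
`|b| ≤ |a|`, `2 * K a b` is the determinant `q a * p b - p a * q b` of the centred polynomials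
`p b = 2b² - n` and `q b = 4b⁴ - n(3n - 1)`, whose weighted partial sums telescope. Hence the sum
of `w a * w b * K a b` along an edge of the box `|a|, |b| ≤ N` has a closed form, and the double sum
over the box telescopes in `N`.
-/

open Finset

theorem finsum_mul_mul_mul_eq_sum {ι R : Type*} [Semiring R] {s : Finset ι} {w : ι → R}
    (hw : Function.support w ⊆ s) (f : ι → ι → ι → R) :
    ∑ᶠ i, ∑ᶠ j, ∑ᶠ k, w i * w j * w k * f i j k
      = ∑ i ∈ s, ∑ j ∈ s, ∑ k ∈ s, w i * w j * w k * f i j k := by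
  have hw' : ∀ i ∉ s, w i = 0 := fun i hi => Function.notMem_support.1 fun h => hi (hw h)
  have finsum_eq_sum (g : ι → R) (hg : ∀ i ∉ s, g i = 0) : ∑ᶠ i, g i = ∑ i ∈ s, g i :=
    finsum_eq_sum_of_support_subset _ fun i hi => by_contra fun his => hi (hg i his)
  rw [finsum_eq_sum _ fun i hi => by simp [hw' i hi]]
  refine sum_congr rfl fun i _ => ?_
  rw [finsum_eq_sum _ fun j hj => by simp [hw' j hj]]
  refine sum_congr rfl fun j _ => ?_
  exact finsum_eq_sum _ fun k hk => by simp [hw' k hk]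

theorem sum_Icc_neg_succ_of_even {R : Type*} [Ring R] {f : ℤ → R} (hf : f.Even) (N : ℕ) :
    ∑ a ∈ Icc (-((N + 1 : ℕ) : ℤ)) (N + 1 : ℕ), f a
      = ∑ a ∈ Icc (-(N : ℤ)) N, f a + 2 * f (N + 1) := by
  rw [sum_Icc_of_even_eq_range hf, sum_Icc_of_even_eq_range hf, sum_range_succ]
  push_cast
  rw [two_mul, two_nsmul, two_nsmul]
  abel

theorem sum_sum_Icc_neg_succ_of_even {R : Type*} [Ring R] {f : ℤ → ℤ → R}
    (hsymm : ∀ a b, f a b = f b a) (heven : ∀ a, (f a).Even) (hdiag : ∀ a, f a a = 0) (N : ℕ) :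
    ∑ a ∈ Icc (-((N + 1 : ℕ) : ℤ)) (N + 1 : ℕ), ∑ b ∈ Icc (-((N + 1 : ℕ) : ℤ)) (N + 1 : ℕ), f a b
      = ∑ a ∈ Icc (-(N : ℤ)) N, ∑ b ∈ Icc (-(N : ℤ)) N, f a b
        + 4 * ∑ b ∈ Icc (-(N : ℤ)) N, f (N + 1) b := by
  have heven_sum (s : Finset ℤ) : (fun a => ∑ b ∈ s, f a b).Even := fun a =>
    sum_congr rfl fun b _ => by rw [hsymm, heven, hsymm]
  simp only [sum_Icc_neg_succ_of_even (heven_sum _), sum_Icc_neg_succ_of_even (heven _),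
    sum_add_distrib, ← mul_sum, hdiag, fun a => hsymm a (N + 1)]
  noncomm_ring

section AbsVandermonde

variable {R : Type*} [CommRing R] [LinearOrder R] [IsStrictOrderedRing R]

theorem abs_sub_mul_sub_mul_sub (x y z : R) :
    |(x - y) * (x - z) * (y - z)|
      = |x - y| * ((x - z) * (y - z)) + |x - z| * ((x - y) * (z - y))
        + |y - z| * ((y - x) * (z - x)) := by
  rw [abs_mul, abs_mul]
  rcases abs_cases (x - y) with ⟨hxy, _⟩ | ⟨hxy, _⟩ <;>
  rcases abs_cases (x - z) with ⟨hxz, _⟩ | ⟨hxz, _⟩ <;>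
  rcases abs_cases (y - z) with ⟨hyz, _⟩ | ⟨hyz, _⟩ <;>
  rw [hxy, hxz, hyz] <;>
  first
    | ring1
    | (exfalso; linarith)

theorem sum_mul_abs_sub_mul_sub_mul_sub {ι : Type*} (s : Finset ι) (w x : ι → R) :
    ∑ i ∈ s, ∑ j ∈ s, ∑ k ∈ s, w i * w j * w k * |(x i - x j) * (x i - x k) * (x j - x k)|
      = 3 * ∑ i ∈ s, ∑ j ∈ s, w i * w j * (|x i - x j| *
          ∑ k ∈ s, w k * ((x i - x k) * (x j - x k))) := by
  let g (i j k : ι) : R := w i * w j * w k * (|x i - x j| * ((x i - x k) * (x j - x k)))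
  have hsplit (i j k : ι) : w i * w j * w k * |(x i - x j) * (x i - x k) * (x j - x k)|
      = g i j k + g i k j + g j k i := by
    simp only [g, abs_sub_mul_sub_mul_sub]
    ring
  have hswap : ∑ i ∈ s, ∑ j ∈ s, ∑ k ∈ s, g i k j = ∑ i ∈ s, ∑ j ∈ s, ∑ k ∈ s, g i j k :=
    sum_congr rfl fun i _ => sum_comm
  have hcycle : ∑ i ∈ s, ∑ j ∈ s, ∑ k ∈ s, g j k i = ∑ i ∈ s, ∑ j ∈ s, ∑ k ∈ s, g i j k :=
    sum_comm_cycle.symm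
  have hfactor (i j : ι) : ∑ k ∈ s, g i j k
      = w i * w j * (|x i - x j| * ∑ k ∈ s, w k * ((x i - x k) * (x j - x k))) := by
    simp only [g, mul_sum]
    exact sum_congr rfl fun k _ => by ring
  simp only [hsplit, sum_add_distrib, hswap, hcycle, ← hfactor]
  ring

end AbsVandermonde

theorem ichoose_natCast (n k : ℕ) : ichoose n k = n.choose k := by
  simp [ichoose]

theorem ichoose_of_neg (n : ℕ) {k : ℤ} (hk : k < 0) : ichoose n k = 0 :=
  if_neg hk.not_ge

theorem ichoose_of_lt {n : ℕ} {k : ℤ} (hk : n < k) : ichoose n k = 0 := by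
  lift k to ℕ using by lia
  rw [ichoose_natCast, Nat.choose_eq_zero_of_lt (by exact_mod_cast hk), Nat.cast_zero]

theorem ichoose_sub (n : ℕ) (k : ℤ) : ichoose n (n - k) = ichoose n k := by
  rcases lt_or_ge k 0 with hk | hk
  · rw [ichoose_of_neg n hk, ichoose_of_lt (by lia)]
  rcases lt_or_ge (n : ℤ) k with hnk | hnk
  · rw [ichoose_of_lt hnk, ichoose_of_neg n (by lia)]
  lift k to ℕ using hk
  have hkn : k ≤ n := by exact_mod_cast hnk
  rw [← Nat.cast_sub hkn, ichoose_natCast, ichoose_natCast, Nat.choose_symm hkn]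

theorem succ_mul_ichoose_succ (n : ℕ) (k : ℤ) :
    (k + 1) * ichoose n (k + 1) = (n - k) * ichoose n k := by
  rcases lt_trichotomy k (-1) with hk | rfl | hk
  · rw [ichoose_of_neg n (by lia), ichoose_of_neg n (by lia), mul_zero, mul_zero]
  · simp [ichoose_of_neg]
  lift k to ℕ using by lia
  rcases lt_or_ge n k with hnk | hkn
  · rw [ichoose_of_lt (by lia), ichoose_of_lt (by lia), mul_zero, mul_zero]
  have hchoose := Nat.choose_succ_right_eq n k
  zify [hkn] at hchoose
  rw [← Nat.cast_succ, ichoose_natCast, ichoose_natCast]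
  push_cast
  linear_combination hchoose

theorem support_ichoose_add_subset (n : ℕ) :
    Function.support (fun i : ℤ => ichoose (2 * n) (n + i)) ⊆ Icc (-(n : ℤ)) n := by
  intro i hi
  rw [coe_Icc, Set.mem_Icc]
  by_contra hout
  rcases lt_or_ge i (-n) with hlt | hge
  · exact hi (ichoose_of_neg _ (by lia))
  · exact hi (ichoose_of_lt (by push_cast; lia))

theorem ichoose_add_neg (n : ℕ) (i : ℤ) :
    ichoose (2 * n) (n + -i) = ichoose (2 * n) (n + i) := by
  rw [← ichoose_sub]
  congr 1
  push_cast
  ring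

theorem succ_mul_ichoose_add_succ (n : ℕ) (a : ℤ) :
    (n + a + 1) * ichoose (2 * n) (n + (a + 1)) = (n - a) * ichoose (2 * n) (n + a) := by
  have h := succ_mul_ichoose_succ (2 * n) (n + a)
  push_cast at h
  rw [← add_assoc]
  linear_combination h

theorem sum_ichoose_add (n : ℕ) :
    ∑ i ∈ Icc (-(n : ℤ)) n, ichoose (2 * n) (n + i) = 2 ^ (2 * n) := by
  calc ∑ i ∈ Icc (-(n : ℤ)) n, ichoose (2 * n) (n + i)
      = ∑ m ∈ range (2 * n + 1), ((2 * n).choose m : ℤ) := by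
        refine sum_nbij' (fun i => (n + i).toNat) (fun m => m - n) ?_ ?_ ?_ ?_ ?_ <;>
          grind [ichoose]
    _ = 2 ^ (2 * n) := by exact_mod_cast Nat.sum_range_choose (2 * n)

theorem sum_Icc_ichoose_mul_sq_sub (n N : ℕ) :
    ∑ b ∈ Icc (-(N : ℤ)) N, ichoose (2 * n) (n + b) * (2 * b ^ 2 - n)
      = -(2 * N + 1) * (n - N) * ichoose (2 * n) (n + N) := by
  induction N with
  | zero =>
    simp only [Nat.cast_zero, neg_zero, Icc_self, sum_singleton, add_zero]
    ring
  | succ N ih =>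
    rw [sum_Icc_neg_succ_of_even, ih]
    · push_cast
      linear_combination (2 * (N : ℤ) + 1) * succ_mul_ichoose_add_succ n N
    · intro b
      simp only [ichoose_add_neg, neg_sq]

theorem sum_Icc_ichoose_mul_pow_four_sub (n N : ℕ) :
    ∑ b ∈ Icc (-(N : ℤ)) N, ichoose (2 * n) (n + b) * (4 * b ^ 4 - n * (3 * n - 1))
      = -(2 * N + 1) * (3 * n - 1 + 2 * N * (N + 1)) * (n - N) * ichoose (2 * n) (n + N) := by
  induction N with
  | zero =>
    simp only [Nat.cast_zero, neg_zero, Icc_self, sum_singleton, add_zero]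
    ring
  | succ N ih =>
    rw [sum_Icc_neg_succ_of_even, ih]
    · push_cast
      linear_combination
        (2 * (N : ℤ) + 1) * (3 * n - 1 + 2 * N * (N + 1)) * succ_mul_ichoose_add_succ n N
    · intro b
      simp only [ichoose_add_neg, Even.neg_pow (by decide : Even 4)]

theorem two_mul_sum_ichoose_mul_sq (n : ℕ) :
    2 * ∑ i ∈ Icc (-(n : ℤ)) n, ichoose (2 * n) (n + i) * i ^ 2 = n * 2 ^ (2 * n) := by
  have h := sum_Icc_ichoose_mul_sq_sub n n
  simp only [mul_sub, mul_left_comm _ (2 : ℤ), sum_sub_distrib, ← mul_sum, ← sum_mul,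
    sum_ichoose_add] at h
  linear_combination h

theorem four_mul_sum_ichoose_mul_pow_four (n : ℕ) :
    4 * ∑ i ∈ Icc (-(n : ℤ)) n, ichoose (2 * n) (n + i) * i ^ 4
      = n * (3 * n - 1) * 2 ^ (2 * n) := by
  have h := sum_Icc_ichoose_mul_pow_four_sub n n
  simp only [mul_sub (ichoose _ _), mul_left_comm _ (4 : ℤ), sum_sub_distrib, ← mul_sum, ← sum_mul,
    sum_ichoose_add] at h
  linear_combination h

/-- The kernel left on `(a, b)` after `k` is summed out of `|a² - b²| * (a² - k²) * (b² - k²)`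
against the weights `ichoose (2 * n) (n + k)`. It is normalised by the factor `4 / 2 ^ (2 * n)`,
which makes its coefficients integers. -/
def vandermondeKernel (n : ℕ) (a b : ℤ) : ℤ :=
  |a ^ 2 - b ^ 2| * (4 * a ^ 2 * b ^ 2 - 2 * n * (a ^ 2 + b ^ 2) + n * (3 * n - 1))

theorem four_mul_abs_mul_sum_ichoose_mul (n : ℕ) (a b : ℤ) :
    4 * (|a ^ 2 - b ^ 2| *
        ∑ k ∈ Icc (-(n : ℤ)) n, ichoose (2 * n) (n + k) * ((a ^ 2 - k ^ 2) * (b ^ 2 - k ^ 2)))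
      = 2 ^ (2 * n) * vandermondeKernel n a b := by
  have hexpand :
      ∑ k ∈ Icc (-(n : ℤ)) n, ichoose (2 * n) (n + k) * ((a ^ 2 - k ^ 2) * (b ^ 2 - k ^ 2))
        = a ^ 2 * b ^ 2 * ∑ k ∈ Icc (-(n : ℤ)) n, ichoose (2 * n) (n + k)
          - (a ^ 2 + b ^ 2) * ∑ k ∈ Icc (-(n : ℤ)) n, ichoose (2 * n) (n + k) * k ^ 2
          + ∑ k ∈ Icc (-(n : ℤ)) n, ichoose (2 * n) (n + k) * k ^ 4 := by
    rw [mul_sum, mul_sum, ← sum_sub_distrib, ← sum_add_distrib]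
    exact sum_congr rfl fun k _ => by ring
  rw [hexpand, sum_ichoose_add, vandermondeKernel]
  linear_combination |a ^ 2 - b ^ 2| *
    (four_mul_sum_ichoose_mul_pow_four n - 2 * (a ^ 2 + b ^ 2) * two_mul_sum_ichoose_mul_sq n)

theorem vandermondeKernel_comm (n : ℕ) (a b : ℤ) :
    vandermondeKernel n a b = vandermondeKernel n b a := by
  rw [vandermondeKernel, vandermondeKernel, abs_sub_comm]
  ring

theorem vandermondeKernel_self (n : ℕ) (a : ℤ) : vandermondeKernel n a a = 0 := by
  simp [vandermondeKernel]

theorem vandermondeKernel_neg_right (n : ℕ) (a b : ℤ) :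
    vandermondeKernel n a (-b) = vandermondeKernel n a b := by
  simp only [vandermondeKernel, neg_sq]

theorem two_mul_vandermondeKernel_of_abs_le (n : ℕ) {a b : ℤ} (hba : |b| ≤ |a|) :
    2 * vandermondeKernel n a b
      = (4 * a ^ 4 - n * (3 * n - 1)) * (2 * b ^ 2 - n)
        - (2 * a ^ 2 - n) * (4 * b ^ 4 - n * (3 * n - 1)) := by
  rw [vandermondeKernel, abs_of_nonneg (sub_nonneg.2 (sq_le_sq.2 hba))]
  ring

theorem sum_Icc_ichoose_mul_vandermondeKernel_succ (n N : ℕ) :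
    ∑ b ∈ Icc (-(N : ℤ)) N, ichoose (2 * n) (n + b) * vandermondeKernel n (N + 1) b
      = ichoose (2 * n) (n + N) * (n - N) * (n - N - 1) * (N + 1) * (2 * N + 1) * (2 * N + 3) := by
  have hwedge :
      2 * ∑ b ∈ Icc (-(N : ℤ)) N, ichoose (2 * n) (n + b) * vandermondeKernel n (N + 1) b
        = (4 * (N + 1 : ℤ) ^ 4 - n * (3 * n - 1)) *
            ∑ b ∈ Icc (-(N : ℤ)) N, ichoose (2 * n) (n + b) * (2 * b ^ 2 - n)
          - (2 * (N + 1 : ℤ) ^ 2 - n) *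
            ∑ b ∈ Icc (-(N : ℤ)) N, ichoose (2 * n) (n + b) * (4 * b ^ 4 - n * (3 * n - 1)) := by
    rw [mul_sum, mul_sum, mul_sum, ← sum_sub_distrib]
    refine sum_congr rfl fun b hb => ?_
    have hle : |b| ≤ |(N + 1 : ℤ)| := by
      rw [abs_of_nonneg (by positivity : (0 : ℤ) ≤ N + 1)]
      exact (abs_le.2 (mem_Icc.1 hb)).trans (by lia)
    linear_combination ichoose (2 * n) (n + b) * two_mul_vandermondeKernel_of_abs_le n hle
  rw [sum_Icc_ichoose_mul_sq_sub, sum_Icc_ichoose_mul_pow_four_sub] at hwedge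
  refine mul_left_cancel₀ two_ne_zero (hwedge.trans ?_)
  ring

-- The factor `n - 1` clears the denominator of the antidifference in `N`.
theorem sub_one_mul_sum_sum_Icc_vandermondeKernel (n N : ℕ) :
    ((n : ℤ) - 1) * ∑ a ∈ Icc (-(N : ℤ)) N, ∑ b ∈ Icc (-(N : ℤ)) N,
        ichoose (2 * n) (n + a) * ichoose (2 * n) (n + b) * vandermondeKernel n a b
      = 2 * n ^ 3 * (n - 1) ^ 2 * ichoose (2 * n) n ^ 2
        - 2 * ichoose (2 * n) (n + N) ^ 2 * (n - N) ^ 2 * (n - N - 1) * (n + N) *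
          (n - 1 + 2 * N * (N + 1)) := by
  induction N with
  | zero =>
    simp only [Nat.cast_zero, neg_zero, Icc_self, sum_singleton, add_zero, vandermondeKernel_self]
    ring
  | succ N ih =>
    rw [sum_sum_Icc_neg_succ_of_even, mul_add, ih]
    · simp only [mul_assoc (ichoose (2 * n) (n + (N + 1))), ← mul_sum,
        sum_Icc_ichoose_mul_vandermondeKernel_succ]
      push_cast
      linear_combination
        (2 * (n - N - 1 : ℤ) * (n + N) * (n - 1 + 2 * N * (N + 1)) *
            ((n - N) * ichoose (2 * n) (n + N) + (n + N + 1) * ichoose (2 * n) (n + (N + 1)))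
          - 4 * (n - 1 : ℤ) * (n - N - 1) * (N + 1) * (2 * N + 1) * (2 * N + 3) *
            ichoose (2 * n) (n + (N + 1))) * succ_mul_ichoose_add_succ n N
    · intro a b
      rw [vandermondeKernel_comm]
      ring
    · intro a b
      simp only [ichoose_add_neg, vandermondeKernel_neg_right]
    · intro a
      rw [vandermondeKernel_self, mul_zero]

theorem sum_sum_vandermondeKernel (n : ℕ) :
    ∑ a ∈ Icc (-(n : ℤ)) n, ∑ b ∈ Icc (-(n : ℤ)) n,
        ichoose (2 * n) (n + a) * ichoose (2 * n) (n + b) * vandermondeKernel n a b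
      = 2 * n ^ 3 * (n - 1) * ichoose (2 * n) n ^ 2 := by
  rcases eq_or_ne n 1 with rfl | hn
  · decide
  have hn' : (n : ℤ) - 1 ≠ 0 := sub_ne_zero.2 (by exact_mod_cast hn)
  refine mul_left_cancel₀ hn' ((sub_one_mul_sum_sum_Icc_vandermondeKernel n n).trans ?_)
  ring

theorem stmt11 (n : ℕ) (hn : 1 ≤ n) :
    ∑ᶠ i : ℤ, ∑ᶠ j : ℤ, ∑ᶠ k : ℤ,
        ichoose (2 * n) (n + i) * ichoose (2 * n) (n + j) * ichoose (2 * n) (n + k)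
          * |(i ^ 2 - j ^ 2) * (i ^ 2 - k ^ 2) * (j ^ 2 - k ^ 2)|
      = 3 * n ^ 3 * ((n : ℤ) - 1) * ((2 * n).choose n : ℤ) ^ 2 * 2 ^ (2 * n - 1) := by
  rw [finsum_mul_mul_mul_eq_sum (support_ichoose_add_subset n),
    sum_mul_abs_sub_mul_sub_mul_sub _ (fun i : ℤ => ichoose (2 * n) (n + i)) (fun i : ℤ => i ^ 2)]
  refine mul_left_cancel₀ four_ne_zero ?_
  have hpow : (2 : ℤ) ^ (2 * n) = 2 * 2 ^ (2 * n - 1) := (mul_pow_sub_one (by lia) 2).symm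
  calc _ = 3 * ∑ i ∈ Icc (-(n : ℤ)) n, ∑ j ∈ Icc (-(n : ℤ)) n,
            ichoose (2 * n) (n + i) * ichoose (2 * n) (n + j) *
              (2 ^ (2 * n) * vandermondeKernel n i j) := by
        simp only [← four_mul_abs_mul_sum_ichoose_mul, mul_left_comm _ (4 : ℤ), ← mul_sum]
    _ = 3 * (2 ^ (2 * n) * ∑ i ∈ Icc (-(n : ℤ)) n, ∑ j ∈ Icc (-(n : ℤ)) n,
            ichoose (2 * n) (n + i) * ichoose (2 * n) (n + j) * vandermondeKernel n i j) := by
        simp only [mul_left_comm _ ((2 : ℤ) ^ (2 * n)), ← mul_sum]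
    _ = _ := by
        rw [sum_sum_vandermondeKernel, hpow, ichoose_natCast]
        ring
end

section
/- For all positive integers n, the double sum over integers i, j of binom(2n, n+i) * binom(2n, n+j) * |i^6 - j^6| equals (2 n^3 (11n^2 - 15n + 5) / (2n-1)) * binom(2n, n)^2. -/
/-!
Folding `i ↦ |i|` turns the double sum into one over `0 ≤ i, j ≤ n` with weights `a j`, the mass of
row `2 * n` at distance `j` from the centre. Since `f j = j ^ 6` is monotone there, Abel summation
expresses the sum through the partial sums of `a j * (f j - μ)`. When `μ` is the mean of `f`, the
sum over `j < m` is `-2 * Q m * (n + m) * w m` for `1 ≤ m`, where `Q` is a polynomial and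
`w m = (2 * n).choose (n + m)`: this rests on `(n + m + 1) * w (m + 1) = (n - m) * w m`, which makes
`(P m * (n + m) - P (m + 1) * (n - m)) * w m` telescope for every `P`. What remains is a sum of
`p m * w m ^ 2` with `p` an odd polynomial of degree five. As
`(P m * (n + m) ^ 2 - P (m + 1) * (n - m) ^ 2) * w m ^ 2` telescopes too, each odd moment of `w ^ 2`
is a rational multiple of `w 0 ^ 2`.
-/

open Finset

section AbelSummation

variable {R : Type*} [CommRing R] [LinearOrder R] [IsStrictOrderedRing R]

theorem sum_range_succ_sum_range_succ_mul_abs_sub (a : ℕ → R) {f : ℕ → R} (hf : Monotone f)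
    (N : ℕ) :
    ∑ i ∈ range (N + 1), ∑ j ∈ range (N + 1), a i * a j * |f i - f j| =
      ∑ i ∈ range N, ∑ j ∈ range N, a i * a j * |f i - f j| +
        2 * a N * ∑ j ∈ range N, a j * (f N - f j) := by
  have hrow : ∑ j ∈ range N, a N * a j * |f N - f j| = a N * ∑ j ∈ range N, a j * (f N - f j) := by
    rw [mul_sum]
    refine sum_congr rfl fun j hj => ?_
    rw [abs_of_nonneg (sub_nonneg.2 (hf (mem_range.1 hj).le)), mul_assoc]
  have hcol : ∑ i ∈ range N, a i * a N * |f i - f N| = ∑ j ∈ range N, a N * a j * |f N - f j| :=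
    sum_congr rfl fun i _ => by rw [abs_sub_comm, mul_comm (a i)]
  simp only [sum_range_succ, sum_add_distrib, hcol, hrow, sub_self, abs_zero]
  ring

theorem sum_range_sum_range_mul_abs_sub (a : ℕ → R) {f : ℕ → R} (hf : Monotone f) (μ : R) (N : ℕ) :
    ∑ i ∈ range N, ∑ j ∈ range N, a i * a j * |f i - f j| =
      2 * ((∑ j ∈ range N, a j) * ∑ j ∈ range N, a j * (f j - μ) -
        ∑ m ∈ range N, a m *
          (∑ j ∈ range m, a j * (f j - μ) + ∑ j ∈ range (m + 1), a j * (f j - μ))) := by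
  induction N with
  | zero => simp
  | succ N ih =>
    have hdiff : ∑ j ∈ range N, a j * (f N - f j) =
        (f N - μ) * ∑ j ∈ range N, a j - ∑ j ∈ range N, a j * (f j - μ) := by
      rw [mul_sum, ← sum_sub_distrib]
      exact sum_congr rfl fun j _ => by ring
    rw [sum_range_succ_sum_range_succ_mul_abs_sub a hf, ih, hdiff]
    simp only [sum_range_succ _ N]
    ring

end AbelSummation

section Folding

/-- The number of integers of absolute value `j`. -/
def natAbsMultiplicity (j : ℕ) : ℕ := if j = 0 then 1 else 2

theorem sum_range_succ_natAbsMultiplicity_mul {R : Type*} [CommRing R] (g : ℕ → R) (N : ℕ) :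
    ∑ j ∈ range (N + 1), natAbsMultiplicity j * g j = 2 * ∑ j ∈ range (N + 1), g j - g 0 := by
  simp only [sum_range_succ', natAbsMultiplicity, Nat.add_one_ne_zero, if_true, if_false, mul_add,
    mul_sum, Nat.cast_one, Nat.cast_ofNat]
  ring

theorem finsum_comp_natAbs {R : Type*} [CommRing R] {g : ℕ → R} {N : ℕ}
    (hg : ∀ j, N < j → g j = 0) :
    ∑ᶠ i : ℤ, g i.natAbs = ∑ j ∈ range (N + 1), natAbsMultiplicity j * g j := by
  have hsupp : (Function.support fun i : ℤ => g i.natAbs) ⊆ Icc (-(N : ℤ)) N := by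
    intro i hi
    have : ¬N < i.natAbs := fun h => hi (hg _ h)
    rw [coe_Icc, Set.mem_Icc]
    omega
  rw [finsum_eq_sum_of_support_subset _ hsupp,
    sum_Icc_of_even_eq_range (fun i => by rw [Int.natAbs_neg]),
    sum_range_succ_natAbsMultiplicity_mul]
  simp

/-- The total of the binomial coefficients `(2 * n).choose (n + i)` over the integers `i` with
`|i| = j`. -/
def foldedChoose (n j : ℕ) : ℚ := natAbsMultiplicity j * (2 * n).choose (n + j)

theorem ichoose_two_mul_add (n : ℕ) (i : ℤ) :
    ichoose (2 * n) (n + i) = (2 * n).choose (n + i.natAbs) := by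
  rw [ichoose]
  rcases lt_or_ge n i.natAbs with hi | hi
  · rw [Nat.choose_eq_zero_of_lt (k := n + i.natAbs) (by omega)]
    split_ifs
    · rw [Nat.choose_eq_zero_of_lt (by omega)]
    · rfl
  · rw [if_pos (by omega)]
    rcases le_total 0 i with h | h
    · rw [show (n + i).toNat = n + i.natAbs by omega]
    · rw [Nat.choose_symm_of_eq_add (show 2 * n = (n + i).toNat + (n + i.natAbs) by omega)]

theorem finsum_finsum_ichoose_mul (n : ℕ) (F : ℕ → ℕ → ℚ) :
    ∑ᶠ i : ℤ, ∑ᶠ j : ℤ, ((ichoose (2 * n) (n + i) : ℚ) * (ichoose (2 * n) (n + j) : ℚ)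
        * F i.natAbs j.natAbs) =
      ∑ i ∈ range (n + 1), ∑ j ∈ range (n + 1), foldedChoose n i * foldedChoose n j * F i j := by
  have hzero : ∀ j, n < j → (2 * n).choose (n + j) = 0 := fun j hj =>
    Nat.choose_eq_zero_of_lt (by omega)
  have hinner : ∀ i : ℕ, ∑ᶠ j : ℤ, ((2 * n).choose (n + i) : ℚ)
        * ((2 * n).choose (n + j.natAbs) : ℚ) * F i j.natAbs =
      ∑ j ∈ range (n + 1), (2 * n).choose (n + i) * foldedChoose n j * F i j := by
    intro i
    rw [finsum_comp_natAbs (N := n)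
      (g := fun j => ((2 * n).choose (n + i) : ℚ) * ((2 * n).choose (n + j) : ℚ) * F i j)
      fun j hj => by simp [hzero j hj]]
    exact sum_congr rfl fun j _ => by rw [foldedChoose]; ring
  simp only [ichoose_two_mul_add, Int.cast_natCast, hinner]
  rw [finsum_comp_natAbs (N := n)
    (g := fun i => ∑ j ∈ range (n + 1), (2 * n).choose (n + i) * foldedChoose n j * F i j)
    fun i hi => by simp [hzero i hi]]
  refine sum_congr rfl fun i _ => ?_
  rw [mul_sum]
  exact sum_congr rfl fun j _ => by unfold foldedChoose; ring

end Folding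

section Telescoping

theorem add_one_mul_choose_two_mul_succ (n m : ℕ) :
    ((n : ℚ) + (m + 1)) * (2 * n).choose (n + (m + 1)) = (n - m) * (2 * n).choose (n + m) := by
  rcases le_or_gt m n with h | h
  · have hrec := Nat.choose_succ_right_eq (2 * n) (n + m)
    rw [show 2 * n - (n + m) = n - m by omega] at hrec
    have hrec' := congrArg (Nat.cast : ℕ → ℚ) hrec
    push_cast [Nat.cast_sub h] at hrec'
    rw [← add_assoc n m 1]
    linarith
  · rw [Nat.choose_eq_zero_of_lt (by omega), Nat.choose_eq_zero_of_lt (by omega)]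
    simp

theorem sum_range_mul_choose_two_mul (n : ℕ) (P : ℕ → ℚ) (N : ℕ) :
    ∑ m ∈ range N, (P m * (n + m) - P (m + 1) * (n - m)) * (2 * n).choose (n + m) =
      P 0 * n * (2 * n).choose n - P N * (n + N) * (2 * n).choose (n + N) := by
  calc
    _ = ∑ m ∈ range N, (P m * (n + m) * (2 * n).choose (n + m) -
          P (m + 1) * (n + (m + 1 : ℕ)) * (2 * n).choose (n + (m + 1))) := by
      refine sum_congr rfl fun m _ => ?_
      push_cast
      linear_combination P (m + 1) * add_one_mul_choose_two_mul_succ n m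
    _ = _ := by
      rw [sum_range_sub' fun m : ℕ => P m * (n + m) * ((2 * n).choose (n + m) : ℚ)]
      simp

theorem sum_range_mul_choose_two_mul_sq (n : ℕ) (P : ℕ → ℚ) :
    ∑ m ∈ range (n + 1), (P m * (n + m) ^ 2 - P (m + 1) * (n - m) ^ 2) *
        ((2 * n).choose (n + m) : ℚ) ^ 2 =
      P 0 * n ^ 2 * ((2 * n).choose n : ℚ) ^ 2 := by
  calc
    _ = ∑ m ∈ range (n + 1), (P m * ((n + m) * (2 * n).choose (n + m)) ^ 2 -
          P (m + 1) * ((n + (m + 1 : ℕ)) * (2 * n).choose (n + (m + 1))) ^ 2) := by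
      refine sum_congr rfl fun m _ => ?_
      push_cast
      rw [add_one_mul_choose_two_mul_succ]
      ring
    _ = _ := by
      rw [sum_range_sub' fun m : ℕ => P m * ((n + m) * ((2 * n).choose (n + m) : ℚ)) ^ 2,
        Nat.choose_eq_zero_of_lt (show 2 * n < n + (n + 1) by omega)]
      simp only [Nat.cast_zero, add_zero, mul_zero]
      ring

end Telescoping

section OddMoments

/-- The `k`-th moment of the squares of the binomial coefficients `(2 * n).choose (n + m)`, taken
over the upper half `0 ≤ m ≤ n` of the row so that odd moments do not cancel. -/
def chooseSqMoment (n k : ℕ) : ℚ :=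
  ∑ m ∈ range (n + 1), (m : ℚ) ^ k * ((2 * n).choose (n + m) : ℚ) ^ 2

theorem chooseSqMoment_one (n : ℕ) :
    chooseSqMoment n 1 = n / 4 * ((2 * n).choose n : ℚ) ^ 2 := by
  rcases eq_or_ne n 0 with rfl | hn
  · simp [chooseSqMoment]
  have hn' : (4 * n : ℚ) ≠ 0 := by positivity
  have htel : 4 * n * chooseSqMoment n 1 = n ^ 2 * ((2 * n).choose n : ℚ) ^ 2 := by
    rw [← one_mul ((n : ℚ) ^ 2), ← sum_range_mul_choose_two_mul_sq n fun _ => 1, chooseSqMoment,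
      mul_sum]
    exact sum_congr rfl fun m _ => by ring
  apply mul_left_cancel₀ hn'
  linear_combination htel

theorem two_mul_sub_one_mul_chooseSqMoment_three (n : ℕ) :
    (2 * n - 1) * chooseSqMoment n 3 = n ^ 2 * chooseSqMoment n 1 := by
  have htel := sum_range_mul_choose_two_mul_sq n fun m => m * (m - 1)
  have hsum : 2 * ((2 * n - 1) * chooseSqMoment n 3 - n ^ 2 * chooseSqMoment n 1) = 0 := by
    simp only [Nat.cast_zero, zero_mul] at htel
    rw [← htel, chooseSqMoment, chooseSqMoment, mul_sum, mul_sum, ← sum_sub_distrib, mul_sum]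
    exact sum_congr rfl fun m _ => by push_cast; ring
  linarith

theorem chooseSqMoment_five (n : ℕ) : chooseSqMoment n 5 = n * chooseSqMoment n 3 := by
  -- The telescoping relation carries a factor `n - 1`, hence says nothing for `n = 1`.
  rcases eq_or_ne n 1 with rfl | hn
  · simp [chooseSqMoment, sum_range_succ]
  have hn' : (n : ℚ) - 1 ≠ 0 := sub_ne_zero.2 (by exact_mod_cast hn)
  have htel := sum_range_mul_choose_two_mul_sq n fun m => (m * (m - 1)) ^ 2
  have hsum : 4 * (n - 1) * (chooseSqMoment n 5 - n * chooseSqMoment n 3) = 0 := by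
    simp only [Nat.cast_zero, zero_mul, zero_pow two_ne_zero] at htel
    rw [← htel, chooseSqMoment, chooseSqMoment, mul_sum, ← sum_sub_distrib, mul_sum]
    exact sum_congr rfl fun m _ => by push_cast; ring
  exact sub_eq_zero.1 ((mul_eq_zero.1 hsum).resolve_left (mul_ne_zero four_ne_zero hn'))

end OddMoments

section SixthPower

/-- The mean of `i ^ 6` when the integer `i` has weight `(2 * n).choose (n + i)`. -/
def meanPowSix (n : ℚ) : ℚ := n * (15 * n ^ 2 - 15 * n + 4) / 8

/-- The telescoping certificate for the sums of `(2 * n).choose (n + m) * (m ^ 6 - meanPowSix n)`.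
It is odd about `m = 1 / 2`, reflecting that the summand is even in `m`. -/
def powSixCert (n m : ℚ) : ℚ :=
  (2 * m - 1) * ((2 * m - 1) ^ 4 + 10 * (n - 1) * (2 * m - 1) ^ 2 + 5 * (12 * n ^ 2 - 14 * n + 5))
    / 64

theorem powSixCert_mul_sub_mul (n m : ℚ) :
    powSixCert n m * (n + m) - powSixCert n (m + 1) * (n - m) = m ^ 6 - meanPowSix n := by
  unfold powSixCert meanPowSix
  ring

theorem powSixCert_mul_add_mul (n m : ℚ) :
    powSixCert n m * (n + m) + powSixCert n (m + 1) * (n - m) =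
      (30 * n ^ 3 - 35 * n ^ 2 + 15 * n - 4) / 8 * m + (10 * n ^ 2 - 15 * n + 10) / 4 * m ^ 3 +
        (2 * n - 5) / 2 * m ^ 5 := by
  unfold powSixCert
  ring

theorem sum_range_succ_foldedChoose_mul_pow_six_sub (n m : ℕ) :
    ∑ j ∈ range (m + 1), foldedChoose n j * ((j : ℚ) ^ 6 - meanPowSix n) =
      -2 * (powSixCert n (m + 1) * (n + (m + 1)) * (2 * n).choose (n + (m + 1))) := by
  have htel := sum_range_mul_choose_two_mul n (fun m => powSixCert n m) (m + 1)
  push_cast at htel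
  simp only [powSixCert_mul_sub_mul] at htel
  have hzero : 2 * powSixCert n 0 * n = -meanPowSix n := by
    unfold powSixCert meanPowSix
    ring
  calc
    _ = ∑ j ∈ range (m + 1), natAbsMultiplicity j *
          (((j : ℚ) ^ 6 - meanPowSix n) * (2 * n).choose (n + j)) :=
      sum_congr rfl fun j _ => by rw [foldedChoose]; ring
    _ = _ := by
      rw [sum_range_succ_natAbsMultiplicity_mul, htel]
      simp only [Nat.cast_zero, add_zero]
      linear_combination ((2 * n).choose n : ℚ) * hzero

theorem sum_range_succ_foldedChoose_mul_pow_six_sub_eq_zero (n : ℕ) :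
    ∑ j ∈ range (n + 1), foldedChoose n j * ((j : ℚ) ^ 6 - meanPowSix n) = 0 := by
  rw [sum_range_succ_foldedChoose_mul_pow_six_sub, Nat.choose_eq_zero_of_lt (by omega)]
  simp

theorem foldedChoose_succ_mul_sum_add_sum (n m : ℕ) :
    foldedChoose n (m + 1) *
        (∑ j ∈ range (m + 1), foldedChoose n j * ((j : ℚ) ^ 6 - meanPowSix n) +
          ∑ j ∈ range (m + 2), foldedChoose n j * ((j : ℚ) ^ 6 - meanPowSix n)) =
      -4 * ((powSixCert n (m + 1) * (n + (m + 1)) +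
        powSixCert n (m + 1 + 1) * (n - (m + 1))) * ((2 * n).choose (n + (m + 1)) : ℚ) ^ 2) := by
  have hrec := add_one_mul_choose_two_mul_succ n (m + 1)
  have hfold : foldedChoose n (m + 1) = 2 * (2 * n).choose (n + (m + 1)) := by
    simp [foldedChoose, natAbsMultiplicity]
  rw [sum_range_succ_foldedChoose_mul_pow_six_sub, sum_range_succ_foldedChoose_mul_pow_six_sub,
    hfold]
  push_cast at hrec ⊢
  linear_combination
    -4 * ((2 * n).choose (n + (m + 1)) : ℚ) * powSixCert n (m + 1 + 1) * hrec

theorem sum_foldedChoose_abs_pow_six_sub_eq_sum_sq (n : ℕ) :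
    ∑ i ∈ range (n + 1), ∑ j ∈ range (n + 1),
        foldedChoose n i * foldedChoose n j * |(i : ℚ) ^ 6 - (j : ℚ) ^ 6| =
      2 * meanPowSix n * ((2 * n).choose n : ℚ) ^ 2 +
        8 * ∑ m ∈ range (n + 1), (powSixCert n m * (n + m) +
          powSixCert n (m + 1) * (n - m)) * ((2 * n).choose (n + m) : ℚ) ^ 2 := by
  have hmono : Monotone fun j : ℕ => (j : ℚ) ^ 6 :=
    fun i j hij => pow_le_pow_left₀ i.cast_nonneg (Nat.cast_le.2 hij) 6
  have hcentre : powSixCert n (0 : ℕ) * (n + (0 : ℕ)) +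
      powSixCert n ((0 : ℕ) + 1) * (n - (0 : ℕ)) = 0 := by
    rw [powSixCert_mul_add_mul]
    simp
  have hfirst : ∑ j ∈ range 0, foldedChoose n j * ((j : ℚ) ^ 6 - meanPowSix n) +
      ∑ j ∈ range (0 + 1), foldedChoose n j * ((j : ℚ) ^ 6 - meanPowSix n) =
        -meanPowSix n * (2 * n).choose n := by
    simp [foldedChoose, natAbsMultiplicity, mul_comm]
  have hzero : foldedChoose n 0 = (2 * n).choose n := by simp [foldedChoose, natAbsMultiplicity]
  rw [sum_range_sum_range_mul_abs_sub _ hmono (meanPowSix n),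
    sum_range_succ_foldedChoose_mul_pow_six_sub_eq_zero, mul_zero, sum_range_succ' _ n, hfirst,
    hzero, sum_range_succ' _ n, hcentre]
  simp only [foldedChoose_succ_mul_sum_add_sum, ← mul_sum, Nat.cast_add_one]
  ring

theorem sum_powSixCert_mul_choose_sq (n : ℕ) :
    8 * ∑ m ∈ range (n + 1), (powSixCert n m * (n + m) +
        powSixCert n (m + 1) * (n - m)) * ((2 * n).choose (n + m) : ℚ) ^ 2 =
      (30 * n ^ 3 - 35 * n ^ 2 + 15 * n - 4) * chooseSqMoment n 1 +
        2 * (10 * n ^ 2 - 15 * n + 10) * chooseSqMoment n 3 +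
        4 * (2 * n - 5) * chooseSqMoment n 5 := by
  simp only [powSixCert_mul_add_mul, chooseSqMoment, mul_sum, ← sum_add_distrib]
  exact sum_congr rfl fun m _ => by ring

theorem sum_foldedChoose_abs_pow_six_sub (n : ℕ) :
    ∑ i ∈ range (n + 1), ∑ j ∈ range (n + 1),
        foldedChoose n i * foldedChoose n j * |(i : ℚ) ^ 6 - (j : ℚ) ^ 6| =
      2 * (n : ℚ) ^ 3 * (11 * n ^ 2 - 15 * n + 5) / (2 * n - 1) * ((2 * n).choose n : ℚ) ^ 2 := by
  have hden : (2 * n - 1 : ℚ) ≠ 0 := by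
    rw [sub_ne_zero]
    exact_mod_cast (show 2 * n ≠ 1 by omega)
  have hthree : chooseSqMoment n 3 = n ^ 2 / (2 * n - 1) * chooseSqMoment n 1 := by
    rw [div_mul_eq_mul_div, eq_div_iff hden]
    linear_combination two_mul_sub_one_mul_chooseSqMoment_three n
  rw [sum_foldedChoose_abs_pow_six_sub_eq_sum_sq, sum_powSixCert_mul_choose_sq,
    chooseSqMoment_five, hthree, chooseSqMoment_one, meanPowSix]
  field_simp
  ring

end SixthPower

theorem stmt14 (n : ℕ) (hn : 1 ≤ n) :
    ∑ᶠ i : ℤ, ∑ᶠ j : ℤ,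
        ((ichoose (2 * n) (n + i) : ℚ) * (ichoose (2 * n) (n + j) : ℚ)
          * |(i : ℚ) ^ 6 - (j : ℚ) ^ 6|)
      = 2 * (n : ℚ) ^ 3 * (11 * n ^ 2 - 15 * n + 5) / (2 * n - 1)
          * ((2 * n).choose n : ℚ) ^ 2 := by
  have hfold : ∀ i j : ℤ, |(i : ℚ) ^ 6 - (j : ℚ) ^ 6| =
      |(i.natAbs : ℚ) ^ 6 - (j.natAbs : ℚ) ^ 6| := fun i j => by
    simp only [Nat.cast_natAbs, Int.cast_abs, Even.pow_abs (show Even 6 by decide)]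
  simp only [hfold]
  rw [finsum_finsum_ichoose_mul n fun i j => |(i : ℚ) ^ 6 - (j : ℚ) ^ 6|,
    sum_foldedChoose_abs_pow_six_sub]
end

section
/- For all positive integers n, the double sum over integers i, j of binom(2n, n+i) * binom(2n, n+j) * |i^2 (i^2 - j^2)| equals (n^3 (4n-3) / (2n-1)) * binom(2n, n)^2. -/
/-!
Write `b m = binom(2n, n + m)`. The summand depends only on `|i|` and `|j|`, and adding its values
at `(i, j)` and `(j, i)` gives a sum over `j < i` in `ℕ` of `w i * w j * (i ^ 4 - j ^ 4)`, where
`w 0 = b 0` and `w m = 2 * b m` for `m > 0`. The constant `n (3 n - 1) / 4` is the mean of `j ^ 4`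
under the weights `w`; after subtracting it, the partial sums of `w j * j ^ 4` have a closed form
`b m * polynomial`, by the two-term recurrence of `b`. Summation by parts then leaves a single sum
of `b m ^ 2 * (odd polynomial in m)`, which telescopes by the same recurrence.
-/

open Finset

section Fold

variable {R : Type*}

/-- The total weight of the integers `i` with `|i| = m` when each integer `i` has weight `b |i|`;
it turns sums over `ℤ` of functions of `|i|` into sums over `ℕ`. -/
def foldWeight [Semiring R] (b : ℕ → R) (m : ℕ) : R := if m = 0 then b 0 else 2 * b m

@[simp]
theorem foldWeight_zero [Semiring R] (b : ℕ → R) : foldWeight b 0 = b 0 := rfl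

@[simp]
theorem foldWeight_succ [Semiring R] (b : ℕ → R) (m : ℕ) :
    foldWeight b (m + 1) = 2 * b (m + 1) := rfl

theorem finsum_natAbs_mul [CommRing R] {b : ℕ → R} {N : ℕ} (hb : ∀ m, N < m → b m = 0)
    (h : ℕ → R) :
    ∑ᶠ i : ℤ, b i.natAbs * h i.natAbs = ∑ m ∈ range (N + 1), foldWeight b m * h m := by
  have hsupp : (Function.support fun i : ℤ => b i.natAbs * h i.natAbs) ⊆ Icc (-N : ℤ) N := by
    intro i hi
    have : ¬ N < i.natAbs := fun hlt => hi (by simp [hb _ hlt])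
    rw [coe_Icc, Set.mem_Icc]
    omega
  have heven : Function.Even fun i : ℤ => b i.natAbs * h i.natAbs := fun i => by
    simp only [Int.natAbs_neg]
  rw [finsum_eq_sum_of_support_subset _ hsupp, sum_Icc_of_even_eq_range heven, sum_range_succ',
    sum_range_succ']
  simp only [Int.natAbs_natCast, Int.natAbs_zero, Nat.cast_zero, foldWeight_succ, foldWeight_zero,
    mul_assoc, ← mul_sum, nsmul_eq_mul, Nat.cast_ofNat]
  ring

end Fold

section Pairs

variable {R : Type*}

theorem sum_range_sum_range_eq_sum_lt_add_diag [AddCommMonoid R] (F : ℕ → ℕ → R) (N : ℕ) :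
    ∑ i ∈ range N, ∑ j ∈ range N, F i j
      = ∑ i ∈ range N, ∑ j ∈ range i, (F i j + F j i) + ∑ i ∈ range N, F i i := by
  induction N with
  | zero => simp
  | succ N ih =>
    simp only [sum_range_succ, sum_add_distrib] at ih ⊢
    rw [ih]
    abel

theorem sum_mul_abs_sq_mul_sq_sub_sq [CommRing R] [LinearOrder R] [IsStrictOrderedRing R]
    (w : ℕ → R) (N : ℕ) :
    ∑ i ∈ range N, ∑ j ∈ range N, w i * w j * |(i : R) ^ 2 * ((i : R) ^ 2 - (j : R) ^ 2)|
      = ∑ i ∈ range N, ∑ j ∈ range i, w i * w j * ((i : R) ^ 4 - (j : R) ^ 4) := by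
  rw [sum_range_sum_range_eq_sum_lt_add_diag]
  simp only [sub_self, mul_zero, abs_zero, sum_const_zero, add_zero]
  refine sum_congr rfl fun i _ => sum_congr rfl fun j hj => ?_
  have hle : (j : R) ^ 2 ≤ (i : R) ^ 2 := by
    have : (j : R) ≤ i := by exact_mod_cast (mem_range.mp hj).le
    gcongr
  rw [abs_of_nonneg (mul_nonneg (sq_nonneg _) (sub_nonneg.mpr hle)), abs_mul, abs_sub_comm,
    abs_of_nonneg (sub_nonneg.mpr hle), abs_of_nonneg (sq_nonneg _)]
  ring

theorem sum_lt_mul_mul_sub_eq_sum_mul_partial_sums [CommRing R] (w g : ℕ → R) (N : ℕ) :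
    ∑ i ∈ range N, ∑ j ∈ range i, w i * w j * (g i - g j)
      = (∑ i ∈ range N, w i) * ∑ i ∈ range N, w i * g i
        - ∑ i ∈ range N,
            w i * (∑ j ∈ range i, w j * g j + ∑ j ∈ range (i + 1), w j * g j) := by
  induction N with
  | zero => simp
  | succ N ih =>
    have hrow : ∑ j ∈ range N, w N * w j * (g N - g j)
        = w N * g N * ∑ j ∈ range N, w j - w N * ∑ j ∈ range N, w j * g j := by
      rw [mul_sum, mul_sum, ← sum_sub_distrib]
      exact sum_congr rfl fun j _ => by ring
    rw [sum_range_succ, ih, hrow]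
    simp only [sum_range_succ]
    ring

end Pairs

section Recurrence

variable {R : Type*} [CommRing R] {x : R} {b : ℕ → R}

-- The constant `x * (3 * x - 1)` is the one for which Gosper's algorithm sums the left-hand side
-- in closed form.
theorem sum_foldWeight_mul_quartic (hb : ∀ m : ℕ, (x + m + 1) * b (m + 1) = (x - m) * b m)
    (m : ℕ) :
    ∑ j ∈ range (m + 1), foldWeight b j * (4 * (j : R) ^ 4 - x * (3 * x - 1))
      = -((x - m) * b m * ((2 * m + 1) * (2 * m ^ 2 + 2 * m + 3 * x - 1))) := by
  induction m with
  | zero =>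
    rw [zero_add, sum_range_one, foldWeight_zero]
    push_cast
    ring
  | succ m ih =>
    rw [sum_range_succ, ih, foldWeight_succ]
    push_cast
    linear_combination (2 * (m : R) + 1) * (2 * m ^ 2 + 2 * m + 3 * x - 1) * hb m

theorem sum_foldWeight_mul_partial_sums (hb : ∀ m : ℕ, (x + m + 1) * b (m + 1) = (x - m) * b m)
    (m : ℕ) :
    x * (2 * x - 1) * ∑ i ∈ range (m + 1), foldWeight b i *
        (∑ j ∈ range i, foldWeight b j * (4 * (j : R) ^ 4 - x * (3 * x - 1))
          + ∑ j ∈ range (i + 1), foldWeight b j * (4 * (j : R) ^ 4 - x * (3 * x - 1)))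
      = ((x - m) * b m) ^ 2 * (x * (2 * x - 3) * (2 * m + 1) ^ 2 + (2 * x - 1) ^ 2 * (4 * x - 1))
        - 4 * x ^ 4 * (4 * x - 3) * b 0 ^ 2 := by
  induction m with
  | zero =>
    rw [zero_add, sum_range_one, foldWeight_zero, range_zero, sum_empty, zero_add, sum_range_one,
      foldWeight_zero]
    push_cast
    ring
  | succ m ih =>
    rw [sum_range_succ, mul_add, ih, sum_foldWeight_mul_quartic hb, sum_foldWeight_mul_quartic hb,
      foldWeight_succ, ← hb m]
    push_cast
    ring

end Recurrence

theorem sum_sum_foldWeight_mul_abs {R : Type*} [CommRing R] [LinearOrder R] [IsStrictOrderedRing R]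
    {b : ℕ → R} {N : ℕ} (hb : ∀ m : ℕ, ((N : R) + m + 1) * b (m + 1) = (N - m) * b m) :
    (N : R) * (2 * N - 1) * ∑ i ∈ range (N + 1), ∑ j ∈ range (N + 1),
        foldWeight b i * foldWeight b j * |(i : R) ^ 2 * ((i : R) ^ 2 - (j : R) ^ 2)|
      = N ^ 4 * (4 * N - 3) * b 0 ^ 2 := by
  have hcenter : 4 * ∑ i ∈ range (N + 1), ∑ j ∈ range i,
        foldWeight b i * foldWeight b j * ((i : R) ^ 4 - (j : R) ^ 4)
      = ∑ i ∈ range (N + 1), ∑ j ∈ range i, foldWeight b i * foldWeight b j *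
          ((4 * (i : R) ^ 4 - N * (3 * N - 1)) - (4 * (j : R) ^ 4 - N * (3 * N - 1))) := by
    simp only [mul_sum]
    exact sum_congr rfl fun i _ => sum_congr rfl fun j _ => by ring
  have hparts := sum_lt_mul_mul_sub_eq_sum_mul_partial_sums (foldWeight b)
    (fun i => 4 * (i : R) ^ 4 - N * (3 * N - 1)) (N + 1)
  have hmean := sum_foldWeight_mul_quartic hb N
  have htelescope := sum_foldWeight_mul_partial_sums hb N
  rw [sub_self, zero_mul, zero_mul, neg_zero] at hmean
  rw [hmean, ← hcenter, ← sum_mul_abs_sq_mul_sq_sub_sq] at hparts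
  refine mul_left_cancel₀ (four_ne_zero' R) ?_
  linear_combination (N : R) * (2 * N - 1) * hparts - htelescope

section CentralBinomial

theorem succ_mul_choose_two_mul_add (R : Type*) [CommRing R] (n m : ℕ) :
    ((n : R) + m + 1) * ((2 * n).choose (n + (m + 1)) : R)
      = (n - m) * ((2 * n).choose (n + m) : R) := by
  rcases le_or_gt m n with hmn | hmn
  · have hsub : 2 * n - (n + m) = n - m := by omega
    have hrec := congrArg (Nat.cast : ℕ → R) (Nat.choose_succ_right_eq (2 * n) (n + m))
    rw [hsub] at hrec
    push_cast [Nat.cast_sub hmn] at hrec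
    rw [← add_assoc]
    linear_combination hrec
  · rw [Nat.choose_eq_zero_of_lt (by omega), Nat.choose_eq_zero_of_lt (by omega)]
    simp

theorem finsum_ichoose_mul_natAbs {R : Type*} [CommRing R] (n : ℕ) (h : ℕ → R) :
    ∑ᶠ i : ℤ, (ichoose (2 * n) (n + i) : R) * h i.natAbs
      = ∑ m ∈ range (n + 1), foldWeight (fun k => ((2 * n).choose (n + k) : R)) m * h m := by
  have hvanish (m : ℕ) (hm : n < m) : ((2 * n).choose (n + m) : R) = 0 := by
    rw [Nat.choose_eq_zero_of_lt (by omega), Nat.cast_zero]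
  simp only [ichoose_two_mul_add, Int.cast_natCast, ← finsum_natAbs_mul hvanish]

theorem finsum_finsum_ichoose_mul_natAbs {R : Type*} [CommRing R] (n : ℕ) (K : ℕ → ℕ → R) :
    ∑ᶠ i : ℤ, ∑ᶠ j : ℤ, (ichoose (2 * n) (n + i) : R) * (ichoose (2 * n) (n + j) : R)
        * K i.natAbs j.natAbs
      = ∑ i ∈ range (n + 1), ∑ j ∈ range (n + 1),
          foldWeight (fun k => ((2 * n).choose (n + k) : R)) i
            * foldWeight (fun k => ((2 * n).choose (n + k) : R)) j * K i j := by
  let w : ℕ → R := foldWeight fun k => ((2 * n).choose (n + k) : R)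
  have hinner (i : ℤ) :
      ∑ᶠ j : ℤ, (ichoose (2 * n) (n + i) : R) * (ichoose (2 * n) (n + j) : R)
          * K i.natAbs j.natAbs
        = (ichoose (2 * n) (n + i) : R) * ∑ j ∈ range (n + 1), w j * K i.natAbs j := by
    calc
      _ = ∑ᶠ j : ℤ, (ichoose (2 * n) (n + j) : R)
            * ((ichoose (2 * n) (n + i) : R) * K i.natAbs j.natAbs) :=
          finsum_congr fun j => by ring
      _ = ∑ j ∈ range (n + 1), w j * ((ichoose (2 * n) (n + i) : R) * K i.natAbs j) :=
          finsum_ichoose_mul_natAbs n fun j => ichoose (2 * n) (n + i) * K i.natAbs j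
      _ = _ := by
          rw [mul_sum]
          exact sum_congr rfl fun j _ => mul_left_comm _ _ _
  simp only [hinner]
  rw [finsum_ichoose_mul_natAbs n fun i => ∑ j ∈ range (n + 1), w j * K i j]
  simp only [mul_sum, mul_assoc, w]

end CentralBinomial

theorem stmt16 (n : ℕ) (hn : 1 ≤ n) :
    ∑ᶠ i : ℤ, ∑ᶠ j : ℤ,
        ((ichoose (2 * n) (n + i) : ℚ) * (ichoose (2 * n) (n + j) : ℚ)
          * |(i : ℚ) ^ 2 * ((i : ℚ) ^ 2 - (j : ℚ) ^ 2)|)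
      = (n : ℚ) ^ 3 * (4 * n - 3) / (2 * n - 1) * ((2 * n).choose n : ℚ) ^ 2 := by
  have hsq (i : ℤ) : (i : ℚ) ^ 2 = (i.natAbs : ℚ) ^ 2 := by
    rw [Nat.cast_natAbs, Int.cast_abs, sq_abs]
  have hfold := finsum_finsum_ichoose_mul_natAbs n
    fun i j => |(i : ℚ) ^ 2 * ((i : ℚ) ^ 2 - (j : ℚ) ^ 2)|
  have hmain := sum_sum_foldWeight_mul_abs (b := fun k => ((2 * n).choose (n + k) : ℚ))
    (succ_mul_choose_two_mul_add ℚ n)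
  simp only [← hsq] at hfold
  rw [← hfold, add_zero] at hmain
  have hn' : (1 : ℚ) ≤ n := by exact_mod_cast hn
  have hden : (2 * n - 1 : ℚ) ≠ 0 := by linarith
  rw [div_mul_eq_mul_div, eq_div_iff hden]
  refine mul_left_cancel₀ (show (n : ℚ) ≠ 0 by positivity) ?_
  linear_combination hmain
end
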